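/- (Theorem 3.) Let (Ω, 𝓕, μ) be a probability space with measurable events T, O, ζ a countable type, Zx, Zx', Z : Ω → ζ measurable, and H ⊆ ζ × Ω with measurable sections A_z = {ω : (z, ω) ∈ H}; set A = {ω : (Zx ω, ω) ∈ H}, B = {ω : (Zx' ω, ω) ∈ H}. Assume: (i) consistency O ∩ T = A ∩ T and O ∩ Tᶜ = B ∩ Tᶜ; (ii) for all z ≠ w, μ(A_z ∩ A_wᶜ ∩ Zx⁻¹{z} ∩ Zx'⁻¹{w}) = μ(A_z ∩ A_wᶜ)·μ(Zx⁻¹{z} ∩ Zx'⁻¹{w}); (iii) for all z, μ(A_z) = μ(O | Z⁻¹{z}), μ(Zx⁻¹{z}) = μ(Z⁻¹{z} | T), μ(Zx'⁻¹{z}) = μ(Z⁻¹{z} | Tᶜ). Let β, γ, θ, δ be real numbers and define f = β·μ(A ∩ Bᶜ) + γ·μ(A ∩ B) + θ·μ(Aᶜ ∩ Bᶜ) + δ·μ(Aᶜ ∩ B), σ = β − γ − θ + δ, W = (γ − δ)·μ(A) + δ·μ(B) + θ·μ(Bᶜ), L = max{0, μ(A) − μ(B), μ(O) − μ(B), μ(A)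 − μ(O)}, and U = min{μ(A), μ(Bᶜ), μ(O ∩ T) + μ(Oᶜ ∩ Tᶜ), μ(A) − μ(B) + μ(O ∩ Tᶜ) + μ(Oᶜ ∩ T), Σ_z Σ_{w ≠ z} min{μ(O | Z⁻¹{z}), μ(Oᶜ | Z⁻¹{w})}·min{μ(Z⁻¹{z} | T), μ(Z⁻¹{w} | Tᶜ)}}. Then: if σ > 0 then W + σ·L ≤ f ≤ W + σ·U, and if σ < 0 then W + σ·U ≤ f ≤ W + σ·L. -/

import Mathlib

/-!
Partitioning each of `A` and `B` by the other event gives `f = W + σ * p` with `p = μ (A ∩ Bᶜ)`,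
so the claim reduces to `L ≤ p ≤ U`.

Consistency says that `O` determines `A` on `T` and `B` on `Tᶜ`.
All terms of `L`, and all terms of `U` but the last, then follow from subadditivity and set
inclusions. For the last one, purity of the mediator decomposes `A ∩ Bᶜ` according to the values
`z ≠ w` of the two potential mediators (`measure_benefit_le_tsum`); independence factors the
measure of each piece, and each factor is at most the corresponding Fréchet bound
`μ (S ∩ S') ≤ min (μ S) (μ S')`.
-/

open MeasureTheory Set

/-- Conditional probability `μ(A | S) = μ(A ∩ S) / μ(S)`, equal to `0` when
`μ(S) = 0`. -/
noncomputable def condProb {Ω : Type*} [MeasurableSpace Ω] (μ : Measure Ω)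
    (A S : Set Ω) : ENNReal :=
  μ (A ∩ S) / μ S

/-- Complement rule for `condProb`; it fails for a null conditioning event, where both
conditional probabilities are `0`. -/
lemma measure_compl_eq_condProb_compl {Ω : Type*} [MeasurableSpace Ω]
    (μ : Measure Ω) [IsProbabilityMeasure μ] {O S A : Set Ω}
    (hO : MeasurableSet O) (hA : MeasurableSet A) (hS : μ S ≠ 0)
    (h : μ A = condProb μ O S) : μ Aᶜ = condProb μ Oᶜ S := by
  have hsum : condProb μ Oᶜ S + condProb μ O S = 1 := by
    unfold condProb
    rw [← ENNReal.add_div, inter_comm Oᶜ S, inter_comm O S, add_comm, ← sdiff_eq,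
      measure_inter_add_sdiff S hO]
    exact ENNReal.div_self hS (measure_ne_top μ S)
  rw [prob_compl_eq_one_sub hA, h, ← hsum]
  exact ENNReal.add_sub_cancel_right (h ▸ measure_ne_top μ A)

/-- The pure-mediator bound: split `{Y_x = y, Y_x' ≠ y}` by the pair of potential mediator
values. Diagonal pieces `z = w` are empty since the outcome depends on the treatment only through
the mediator. -/
lemma measure_benefit_le_tsum {Ω : Type*} [MeasurableSpace Ω]
    (μ : Measure Ω) [IsProbabilityMeasure μ] {T O : Set Ω} (hO : MeasurableSet O)
    {ζ : Type*} [Countable ζ] [DecidableEq ζ]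
    (Zx Zx' Z : Ω → ζ) (H : Set (ζ × Ω))
    (hsec : ∀ z : ζ, MeasurableSet {ω | (z, ω) ∈ H})
    (hindep : ∀ z w : ζ, z ≠ w →
      μ ({ω | (z, ω) ∈ H} ∩ {ω | (w, ω) ∈ H}ᶜ ∩ Zx ⁻¹' {z} ∩ Zx' ⁻¹' {w})
        = μ ({ω | (z, ω) ∈ H} ∩ {ω | (w, ω) ∈ H}ᶜ) * μ (Zx ⁻¹' {z} ∩ Zx' ⁻¹' {w}))
    (hident : ∀ z : ζ,
      μ {ω | (z, ω) ∈ H} = condProb μ O (Z ⁻¹' {z}) ∧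
      μ (Zx ⁻¹' {z}) = condProb μ (Z ⁻¹' {z}) T ∧
      μ (Zx' ⁻¹' {z}) = condProb μ (Z ⁻¹' {z}) Tᶜ) :
    μ ({ω | (Zx ω, ω) ∈ H} ∩ {ω | (Zx' ω, ω) ∈ H}ᶜ) ≤
      ∑' z, ∑' w, if w = z then 0 else
        min (condProb μ O (Z ⁻¹' {z})) (condProb μ Oᶜ (Z ⁻¹' {w}))
          * min (condProb μ (Z ⁻¹' {z}) T) (condProb μ (Z ⁻¹' {w}) Tᶜ) := by
  have hsub : {ω | (Zx ω, ω) ∈ H} ∩ {ω | (Zx' ω, ω) ∈ H}ᶜ ⊆ ⋃ z, ⋃ w,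
      {ω | (z, ω) ∈ H} ∩ {ω | (w, ω) ∈ H}ᶜ ∩ Zx ⁻¹' {z} ∩ Zx' ⁻¹' {w} := by
    rintro ω ⟨h1, h2⟩
    simp only [mem_iUnion]
    exact ⟨Zx ω, Zx' ω, ⟨⟨h1, h2⟩, rfl⟩, rfl⟩
  refine (measure_mono hsub).trans <| (measure_iUnion_le _).trans <|
    ENNReal.tsum_le_tsum fun z => (measure_iUnion_le _).trans <|
    ENNReal.tsum_le_tsum fun w => ?_
  split_ifs with hwz
  · subst hwz
    simp
  rw [hindep z w (Ne.symm hwz)]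
  have h2 : μ (Zx ⁻¹' {z} ∩ Zx' ⁻¹' {w}) ≤
      min (condProb μ (Z ⁻¹' {z}) T) (condProb μ (Z ⁻¹' {w}) Tᶜ) := by
    rw [← (hident z).2.1, ← (hident w).2.2]
    exact le_min (measure_mono inter_subset_left) (measure_mono inter_subset_right)
  by_cases hw : μ (Z ⁻¹' {w}) = 0
  -- If `Z = w` is null, the conditional probability of `Oᶜ` is the junk value `0` rather than a
  -- bound on the outcome factor, but then the mediator factor vanishes as well.
  · have h0 : condProb μ (Z ⁻¹' {w}) Tᶜ = 0 := by
      unfold condProb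
      rw [measure_mono_null inter_subset_left hw, ENNReal.zero_div]
    have h3 : μ (Zx ⁻¹' {z} ∩ Zx' ⁻¹' {w}) = 0 := by
      simpa [h0] using h2
    simp [h3]
  · refine mul_le_mul' ?_ h2
    rw [← (hident z).1, ← measure_compl_eq_condProb_compl μ hO (hsec w) hw (hident w).1]
    exact le_min (measure_mono inter_subset_left) (measure_mono inter_subset_right)

lemma measurableSet_outcome {Ω ζ : Type*} [MeasurableSpace Ω] [Countable ζ]
    [MeasurableSpace ζ] [MeasurableSingletonClass ζ] {V : Ω → ζ} (hV : Measurable V)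
    {H : Set (ζ × Ω)} (hsec : ∀ z : ζ, MeasurableSet {ω | (z, ω) ∈ H}) :
    MeasurableSet {ω | (V ω, ω) ∈ H} := by
  have h : {ω | (V ω, ω) ∈ H} = ⋃ z, V ⁻¹' {z} ∩ {ω | (z, ω) ∈ H} := by
    ext ω
    simp
  rw [h]
  exact MeasurableSet.iUnion fun z => (hV (measurableSet_singleton z)).inter (hsec z)

/-- Theorem 3: bounds on the benefit function in the pure-mediator case. -/
theorem benefit_bounds_pure_mediator {Ω : Type*} [MeasurableSpace Ω]
    (μ : Measure Ω) [IsProbabilityMeasure μ] {T O : Set Ω}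
    (hT : MeasurableSet T) (hO : MeasurableSet O)
    {ζ : Type*} [Countable ζ] [DecidableEq ζ] [MeasurableSpace ζ]
    [MeasurableSingletonClass ζ]
    (Zx Zx' Z : Ω → ζ)
    (hZx : Measurable Zx) (hZx' : Measurable Zx') (hZ : Measurable Z)
    (H : Set (ζ × Ω))
    (hsec : ∀ z : ζ, MeasurableSet {ω | (z, ω) ∈ H})
    (A B : Set Ω)
    (hAdef : A = {ω | (Zx ω, ω) ∈ H}) (hBdef : B = {ω | (Zx' ω, ω) ∈ H})
    (hcons1 : O ∩ T = A ∩ T) (hcons2 : O ∩ Tᶜ = B ∩ Tᶜ)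
    (hindep : ∀ z w : ζ, z ≠ w →
      μ ({ω | (z, ω) ∈ H} ∩ {ω | (w, ω) ∈ H}ᶜ ∩ Zx ⁻¹' {z} ∩ Zx' ⁻¹' {w})
        = μ ({ω | (z, ω) ∈ H} ∩ {ω | (w, ω) ∈ H}ᶜ) * μ (Zx ⁻¹' {z} ∩ Zx' ⁻¹' {w}))
    (hident : ∀ z : ζ,
      μ {ω | (z, ω) ∈ H} = condProb μ O (Z ⁻¹' {z}) ∧
      μ (Zx ⁻¹' {z}) = condProb μ (Z ⁻¹' {z}) T ∧
      μ (Zx' ⁻¹' {z}) = condProb μ (Z ⁻¹' {z}) Tᶜ)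
    (β γ θ δ : ℝ) (f σ W L : ℝ) (U : ENNReal)
    (hf : f = β * (μ (A ∩ Bᶜ)).toReal + γ * (μ (A ∩ B)).toReal
        + θ * (μ (Aᶜ ∩ Bᶜ)).toReal + δ * (μ (Aᶜ ∩ B)).toReal)
    (hσ : σ = β - γ - θ + δ)
    (hW : W = (γ - δ) * (μ A).toReal + δ * (μ B).toReal + θ * (μ Bᶜ).toReal)
    (hL : L = max 0 (max ((μ A).toReal - (μ B).toReal)
        (max ((μ O).toReal - (μ B).toReal) ((μ A).toReal - (μ O).toReal))))
    (hU : U = min (μ A) (min (μ Bᶜ)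
        (min (μ (O ∩ T) + μ (Oᶜ ∩ Tᶜ))
          (min (μ A + μ (O ∩ Tᶜ) + μ (Oᶜ ∩ T) - μ B)
            (∑' z, ∑' w, if w = z then 0 else
              min (condProb μ O (Z ⁻¹' {z})) (condProb μ Oᶜ (Z ⁻¹' {w}))
                * min (condProb μ (Z ⁻¹' {z}) T) (condProb μ (Z ⁻¹' {w}) Tᶜ)))))) :
    (0 < σ → W + σ * L ≤ f ∧ f ≤ W + σ * U.toReal) ∧
      (σ < 0 → W + σ * U.toReal ≤ f ∧ f ≤ W + σ * L) := by
  have hA : MeasurableSet A := hAdef ▸ measurableSet_outcome hZx hsec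
  have hB : MeasurableSet B := hBdef ▸ measurableSet_outcome hZx' hsec
  have hmed := measure_benefit_le_tsum μ hO Zx Zx' Z H hsec hindep hident
  rw [← hAdef, ← hBdef] at hmed
  have e1 : ∀ ω, ω ∈ T → (ω ∈ O ↔ ω ∈ A) := fun ω h => by
    simpa [h] using Set.ext_iff.1 hcons1 ω
  have e2 : ∀ ω, ω ∉ T → (ω ∈ O ↔ ω ∈ B) := fun ω h => by
    simpa [h] using Set.ext_iff.1 hcons2 ω
  have hAsplit : μ (A ∩ B) + μ (A ∩ Bᶜ) = μ A := measure_inter_add_sdiff A hB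
  have hpU : μ (A ∩ Bᶜ) ≤ U := by
    rw [hU]
    refine le_min (measure_mono inter_subset_left) <| le_min (measure_mono inter_subset_right) <|
      le_min ?_ <| le_min ?_ hmed
    · refine (measure_mono ?_).trans (measure_union_le _ _)
      intro ω hω
      have := e1 ω
      have := e2 ω
      simp only [mem_inter_iff, mem_union, mem_compl_iff] at *
      tauto
    · have hBle : μ B ≤ μ (A ∩ B) + (μ (O ∩ Tᶜ) + μ (Oᶜ ∩ T)) := by
        refine (measure_mono (t := (A ∩ B) ∪ ((O ∩ Tᶜ) ∪ (Oᶜ ∩ T))) ?_).trans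
          ((measure_union_le _ _).trans (add_le_add le_rfl (measure_union_le _ _)))
        intro ω hω
        have := e1 ω
        have := e2 ω
        simp only [mem_inter_iff, mem_union, mem_compl_iff] at *
        tauto
      refine ENNReal.le_sub_of_add_le_right (measure_ne_top μ B) ?_
      calc μ (A ∩ Bᶜ) + μ B
          ≤ μ (A ∩ Bᶜ) + (μ (A ∩ B) + (μ (O ∩ Tᶜ) + μ (Oᶜ ∩ T))) := add_le_add le_rfl hBle
        _ = μ A + μ (O ∩ Tᶜ) + μ (Oᶜ ∩ T) := by rw [← hAsplit]; ring
  have hUtop : U ≠ ⊤ := ne_top_of_le_ne_top (measure_ne_top μ A) (hU ▸ min_le_left _ _)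
  have hpU' : (μ (A ∩ Bᶜ)).toReal ≤ U.toReal := ENNReal.toReal_mono hUtop hpU
  have r1 : μ.real (A ∩ B) + μ.real (A ∩ Bᶜ) = μ.real A := measureReal_inter_add_sdiff hB
  have r2 : μ.real (B ∩ A) + μ.real (B ∩ Aᶜ) = μ.real B := measureReal_inter_add_sdiff hA
  have r3 : μ.real (Bᶜ ∩ A) + μ.real (Bᶜ ∩ Aᶜ) = μ.real Bᶜ := measureReal_inter_add_sdiff hA
  have r4 : μ.real O ≤ μ.real (A ∩ Bᶜ) + μ.real B := by
    refine (measureReal_mono ?_).trans (measureReal_union_le _ _)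
    intro ω hω
    have := e1 ω
    have := e2 ω
    simp only [mem_inter_iff, mem_union, mem_compl_iff] at *
    tauto
  have r5 : μ.real (A ∩ B) ≤ μ.real O := by
    refine measureReal_mono ?_
    intro ω hω
    have := e1 ω
    have := e2 ω
    simp only [mem_inter_iff] at *
    tauto
  rw [inter_comm B A, inter_comm B Aᶜ] at r2
  rw [inter_comm Bᶜ A, inter_comm Bᶜ Aᶜ] at r3
  have r6 : 0 ≤ μ.real (A ∩ Bᶜ) := measureReal_nonneg
  have r7 : 0 ≤ μ.real (Aᶜ ∩ B) := measureReal_nonneg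
  simp only [← measureReal_def] at hf hW hL hpU'
  have hLp : L ≤ μ.real (A ∩ Bᶜ) := by
    rw [hL]
    refine max_le r6 (max_le ?_ (max_le ?_ ?_)) <;> linarith
  have hfW : f = W + σ * μ.real (A ∩ Bᶜ) := by
    rw [hf, hW, hσ, ← r1, ← r2, ← r3]
    ring
  rw [hfW]
  refine ⟨fun h => ⟨?_, ?_⟩, fun h => ⟨?_, ?_⟩⟩
  · exact add_le_add le_rfl (mul_le_mul_of_nonneg_left hLp h.le)
  · exact add_le_add le_rfl (mul_le_mul_of_nonneg_left hpU' h.le)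
  · exact add_le_add le_rfl (mul_le_mul_of_nonpos_left hpU' h.le)
  · exact add_le_add le_rfl (mul_le_mul_of_nonpos_left hLp h.le)
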